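/- Let B₀, D₀ be real constants, let R : (0,∞) → ℝ be continuously differentiable, let S : ℝ → ℝ be three times continuously differentiable, and let G₁, G₂ : (0,∞) × ℝ → ℝ be continuously differentiable functions satisfying, for all r > 0 and θ ∈ ℝ: ∂_r G₁(r,θ) = B₀ S′(θ)/r²; (1/r²)∂_θ G₂(r,θ) = 3(B₀/r² + D₀)·S′(θ)/r² − G₁(r,θ)/r³; and ∂_r G₂(r,θ) = 2B₀(R′(r) − 2S(θ)/r³) − (1/r²)∂_θ G₁(r,θ). Then there exist twice continuously differentiable functions β, ξ : ℝ → ℝ such that G₁(r,θ) = −B₀S′(θ)/r + β(θ) and G₂(r,θ) = 2B₀(R(r) + S(θ)/r²) − B₀S″(θ)/(2r²) + β′(θ)/r + ξ(θ), and moreover β″(θ) + β(θ) = 0, ξ′(θ) = 3D₀S′(θ), and B₀(S⁽³⁾(θ) + 4S′(θ)) = 0 for all θ. -/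

import Mathlib

/-!
For fixed `θ`, (E2) and (E4) are ordinary differential equations in `r`; integrating them on a
connected range of radii gives `G₁` and `G₂` up to integration constants `β(θ)` and `ξ(θ)`.
Values of `G₂` at two radii determine `β′` and `ξ` linearly, so these inherit differentiability
in `θ` from `G₂`. Equation (E3) then reads `a(θ) + b(θ) / r + c(θ) / r² = 0`, and comparing
powers of `1 / r` yields the three angular equations. The first two, `ξ′ = 3D₀S′` and
`β″ = -β`, upgrade the regularity of `ξ` and `β` to `C²`.
-/

open Set

theorem hasDerivAt_const_div_pow {𝕜 : Type*} [NontriviallyNormedField 𝕜] (c : 𝕜) (n : ℕ) {x : 𝕜}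
    (hx : x ≠ 0) : HasDerivAt (fun y => c / y ^ n) (-(n * c) / x ^ (n + 1)) x := by
  refine ((hasDerivAt_const x c).div (hasDerivAt_pow n x) (pow_ne_zero n hx)).congr_deriv ?_
  cases n with
  | zero => simp
  | succ n =>
    rw [Nat.add_sub_cancel]
    field_simp
    ring

theorem coeffs_eq_zero_of_forall_add_div_add_div_sq_eq_zero {K : Type*} [Field K] {s : Set K}
    (hs : s.Infinite) (h0 : 0 ∉ s) {a b c : K} (h : ∀ r ∈ s, a + b / r + c / r ^ 2 = 0) :
    a = 0 ∧ b = 0 ∧ c = 0 := by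
  open Polynomial in
  have hp : (C a * X ^ 2 + C b * X + C c : K[X]) = 0 := by
    refine eq_zero_of_infinite_isRoot _ (hs.mono fun r hr => ?_)
    have hr0 : r ≠ 0 := ne_of_mem_of_not_mem hr h0
    have hr' := h r hr
    field_simp at hr'
    simp only [mem_ofPred_eq, IsRoot.def, eval_add, eval_mul, eval_pow, eval_C, eval_X]
    linear_combination hr'
  have hcoeff (n : ℕ) := congrArg (Polynomial.coeff · n) hp
  exact ⟨by simpa [Polynomial.coeff_X, Polynomial.coeff_C] using hcoeff 2,
    by simpa [Polynomial.coeff_X, Polynomial.coeff_C] using hcoeff 1,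
    by simpa [Polynomial.coeff_X, Polynomial.coeff_C] using hcoeff 0⟩

theorem differentiable_coeffs_of_forall_div_add {𝕜 E : Type*} [NontriviallyNormedField 𝕜]
    [NormedAddCommGroup E] [NormedSpace 𝕜 E] {s : Set 𝕜} (hs : s.Nontrivial) {b d : E → 𝕜}
    (h : ∀ r ∈ s, Differentiable 𝕜 fun x => b x / r + d x) :
    Differentiable 𝕜 b ∧ Differentiable 𝕜 d := by
  obtain ⟨r, hr, t, ht, hrt⟩ := hs
  have hrt' : r⁻¹ - t⁻¹ ≠ 0 := sub_ne_zero.2 (inv_injective.ne hrt)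
  have hb : Differentiable 𝕜 b := by
    have hb_eq : b = fun x => ((b x / r + d x) - (b x / t + d x)) * (r⁻¹ - t⁻¹)⁻¹ := by
      ext x
      rw [eq_mul_inv_iff_mul_eq₀ hrt']
      ring
    exact hb_eq ▸ ((h r hr).fun_sub (h t ht)).mul_const (r⁻¹ - t⁻¹)⁻¹
  exact ⟨hb, by simpa [div_eq_mul_inv] using (h r hr).fun_sub (hb.mul_const r⁻¹)⟩

theorem contDiff_two_iff_deriv {𝕜 F : Type*} [NontriviallyNormedField 𝕜] [NormedAddCommGroup F]
    [NormedSpace 𝕜 F] {f : 𝕜 → F} :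
    ContDiff 𝕜 2 f ↔ Differentiable 𝕜 f ∧ ContDiff 𝕜 1 (deriv f) := by
  rw [← one_add_one_eq_two, contDiff_succ_iff_deriv]
  simp

theorem contDiff_two_of_iteratedDeriv_two_eq_neg {𝕜 F : Type*} [NontriviallyNormedField 𝕜]
    [NormedAddCommGroup F] [NormedSpace 𝕜 F] {f : 𝕜 → F} (hf : Differentiable 𝕜 f)
    (hf' : Differentiable 𝕜 (deriv f)) (h : iteratedDeriv 2 f = -f) : ContDiff 𝕜 2 f := by
  rw [iteratedDeriv_succ, iteratedDeriv_one] at h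
  exact contDiff_two_iff_deriv.2
    ⟨hf, contDiff_one_iff_deriv.2 ⟨hf', h ▸ hf.continuous.neg⟩⟩

section Slices

variable {𝕜 E F G : Type*} [NontriviallyNormedField 𝕜] [NormedAddCommGroup E] [NormedSpace 𝕜 E]
  [NormedAddCommGroup F] [NormedSpace 𝕜 F] [NormedAddCommGroup G] [NormedSpace 𝕜 G]
  {f : E → F → G} {s : Set E} {t : Set F}

theorem differentiableOn_left_of_uncurry
    (hf : DifferentiableOn 𝕜 (Function.uncurry f) (s ×ˢ t)) {y : F} (hy : y ∈ t) :
    DifferentiableOn 𝕜 (fun x => f x y) s :=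
  hf.comp (f := fun x => (x, y)) (by fun_prop) fun _ hx => ⟨hx, hy⟩

theorem differentiableOn_right_of_uncurry
    (hf : DifferentiableOn 𝕜 (Function.uncurry f) (s ×ˢ t)) {x : E} (hx : x ∈ s) :
    DifferentiableOn 𝕜 (f x) t :=
  hf.comp (f := fun y => (x, y)) (by fun_prop) fun _ hy => ⟨hx, hy⟩

end Slices

section GeneralSolution

variable {𝕜 : Type*} [NontriviallyNormedField 𝕜] {s : Set 𝕜} {B D r θ : 𝕜} {R S β ξ : 𝕜 → 𝕜}

/-- The general solution `G₁` of (E2), with integration constant `β θ` on each ray. -/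
noncomputable def generalG₁ (B : 𝕜) (S β : 𝕜 → 𝕜) (r θ : 𝕜) : 𝕜 :=
  -(B * deriv S θ) / r + β θ

/-- The general solution `G₂` of (E4) for `G₁ = generalG₁ B S β`, with integration constant `ξ θ`
on each ray. -/
noncomputable def generalG₂ (B : 𝕜) (R S β ξ : 𝕜 → 𝕜) (r θ : 𝕜) : 𝕜 :=
  2 * B * (R r + S θ / r ^ 2) - B * iteratedDeriv 2 S θ / (2 * r ^ 2) + deriv β θ / r + ξ θ

theorem hasDerivAt_generalG₁_radial (hr : r ≠ 0) :
    HasDerivAt (fun r' => generalG₁ B S β r' θ) (B * deriv S θ / r ^ 2) r := by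
  simpa [generalG₁] using (hasDerivAt_const_div_pow (-(B * deriv S θ)) 1 hr).add_const (β θ)

theorem hasDerivAt_generalG₁_angular (hS : DifferentiableAt 𝕜 (deriv S) θ)
    (hβ : DifferentiableAt 𝕜 β θ) :
    HasDerivAt (generalG₁ B S β r) (-(B * iteratedDeriv 2 S θ) / r + deriv β θ) θ := by
  rw [iteratedDeriv_succ, iteratedDeriv_one]
  exact ((hS.hasDerivAt.const_mul B).neg.div_const r).add hβ.hasDerivAt

theorem hasDerivAt_generalG₂_radial [NeZero (2 : 𝕜)] (hr : r ≠ 0) (hR : DifferentiableAt 𝕜 R r) :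
    HasDerivAt (fun r' => generalG₂ B R S β ξ r' θ)
      (2 * B * (deriv R r - 2 * S θ / r ^ 3)
        - 1 / r ^ 2 * (-(B * iteratedDeriv 2 S θ) / r + deriv β θ)) r := by
  have hS := hasDerivAt_const_div_pow (S θ) 2 hr
  have hS₂ : HasDerivAt (fun r' => B * iteratedDeriv 2 S θ / (2 * r' ^ 2))
      (-(B * iteratedDeriv 2 S θ) / r ^ 3) r := by
    simpa [div_div, mul_div_cancel₀, two_ne_zero (α := 𝕜)] using
      hasDerivAt_const_div_pow (B * iteratedDeriv 2 S θ / 2) 2 hr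
  have hβ : HasDerivAt (fun r' => deriv β θ / r') (-deriv β θ / r ^ 2) r := by
    simpa using hasDerivAt_const_div_pow (deriv β θ) 1 hr
  refine (((((hR.hasDerivAt.add hS).const_mul (2 * B)).sub hS₂).add hβ).add_const
    (ξ θ)).congr_deriv ?_
  push_cast
  field_simp
  ring

theorem hasDerivAt_generalG₂_angular (hS : DifferentiableAt 𝕜 S θ)
    (hS₂ : DifferentiableAt 𝕜 (iteratedDeriv 2 S) θ) (hβ : DifferentiableAt 𝕜 (deriv β) θ)
    (hξ : DifferentiableAt 𝕜 ξ θ) :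
    HasDerivAt (generalG₂ B R S β ξ r)
      (2 * B * (deriv S θ / r ^ 2) - B * iteratedDeriv 3 S θ / (2 * r ^ 2)
        + iteratedDeriv 2 β θ / r + deriv ξ θ) θ := by
  rw [iteratedDeriv_succ (n := 2), iteratedDeriv_succ (f := β), iteratedDeriv_one]
  exact (((((hS.hasDerivAt.div_const (r ^ 2)).const_add (R r)).const_mul (2 * B)).sub
    ((hS₂.hasDerivAt.const_mul B).div_const (2 * r ^ 2))).add (hβ.hasDerivAt.div_const r)).add
      hξ.hasDerivAt

theorem differentiable_of_generalG₁ (hS : Differentiable 𝕜 (deriv S))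
    (hG : Differentiable 𝕜 (generalG₁ B S β r)) : Differentiable 𝕜 β := by
  have hβ : β = fun θ => generalG₁ B S β r θ - -(B * deriv S θ) / r := by
    ext θ
    simp [generalG₁]
  exact hβ ▸ hG.fun_sub ((hS.const_mul B).fun_neg.div_const r)

theorem differentiable_of_generalG₂ (hs : s.Nontrivial) (hS : Differentiable 𝕜 S)
    (hS₂ : Differentiable 𝕜 (iteratedDeriv 2 S))
    (hG : ∀ r ∈ s, Differentiable 𝕜 (generalG₂ B R S β ξ r)) :
    Differentiable 𝕜 (deriv β) ∧ Differentiable 𝕜 ξ := by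
  refine differentiable_coeffs_of_forall_div_add hs fun r hr => ?_
  have hβξ : (fun θ => deriv β θ / r + ξ θ) = fun θ => generalG₂ B R S β ξ r θ -
      (2 * B * (R r + S θ / r ^ 2) - B * iteratedDeriv 2 S θ / (2 * r ^ 2)) := by
    ext θ
    rw [generalG₂]
    ring
  have hknown := (((hS.div_const (r ^ 2)).const_add (R r)).const_mul (2 * B)).fun_sub
    ((hS₂.const_mul B).div_const (2 * r ^ 2))
  exact hβξ ▸ (hG r hr).fun_sub hknown

theorem angular_equations [NeZero (2 : 𝕜)] (hs : s.Infinite) (h0 : 0 ∉ s)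
    (hS : DifferentiableAt 𝕜 S θ) (hS₂ : DifferentiableAt 𝕜 (iteratedDeriv 2 S) θ)
    (hβ : DifferentiableAt 𝕜 (deriv β) θ) (hξ : DifferentiableAt 𝕜 ξ θ)
    (hE3 : ∀ r ∈ s, 1 / r ^ 2 * deriv (generalG₂ B R S β ξ r) θ
      = 3 * (B / r ^ 2 + D) * deriv S θ / r ^ 2 - generalG₁ B S β r θ / r ^ 3) :
    iteratedDeriv 2 β θ + β θ = 0 ∧ deriv ξ θ = 3 * D * deriv S θ ∧
      B * (iteratedDeriv 3 S θ + 4 * deriv S θ) = 0 := by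
  have hpowers (r : 𝕜) (hr : r ∈ s) : (deriv ξ θ - 3 * D * deriv S θ)
      + (iteratedDeriv 2 β θ + β θ) / r
      + -(B * (iteratedDeriv 3 S θ + 4 * deriv S θ)) / 2 / r ^ 2 = 0 := by
    have hr0 : r ≠ 0 := ne_of_mem_of_not_mem hr h0
    have h := hE3 r hr
    rw [(hasDerivAt_generalG₂_angular hS hS₂ hβ hξ).deriv, generalG₁] at h
    field_simp at h ⊢
    linear_combination h
  obtain ⟨hξ', hβ'', hS₃⟩ :=
    coeffs_eq_zero_of_forall_add_div_add_div_sq_eq_zero hs h0 hpowers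
  exact ⟨hβ'', sub_eq_zero.1 hξ', by simpa [two_ne_zero (α := 𝕜)] using hS₃⟩

end GeneralSolution

section RCLike

variable {𝕜 : Type*} [RCLike 𝕜] {s : Set 𝕜}

theorem exists_forall_eq_add_of_hasDerivAt {ι E : Type*} [NormedAddCommGroup E] [NormedSpace 𝕜 E]
    (hs : IsOpen s) (hs' : IsPreconnected s) {f g : 𝕜 → ι → E}
    (hf : ∀ i, DifferentiableOn 𝕜 (fun x => f x i) s)
    (hg : ∀ x ∈ s, ∀ i, HasDerivAt (fun y => g y i) (deriv (fun y => f y i) x) x) :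
    ∃ c : ι → E, ∀ x ∈ s, f x = g x + c := by
  have h (i : ι) : ∃ a, s.EqOn (fun x => f x i) (fun x => g x i + a) :=
    hs.exists_eq_add_of_deriv_eq hs' (hf i)
      (fun x hx => (hg x hx i).differentiableAt.differentiableWithinAt)
      fun x hx => (hg x hx i).deriv.symm
  choose c hc using h
  exact ⟨c, fun x hx => funext fun i => hc i hx⟩

section RadialIntegration

variable {B : 𝕜} {R S β : 𝕜 → 𝕜} {G : 𝕜 → 𝕜 → 𝕜}

theorem exists_eq_generalG₁ (hs : IsOpen s) (hs' : IsPreconnected s) (h0 : 0 ∉ s)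
    (hG : ∀ θ, DifferentiableOn 𝕜 (fun r => G r θ) s)
    (hE2 : ∀ r ∈ s, ∀ θ, deriv (fun r' => G r' θ) r = B * deriv S θ / r ^ 2) :
    ∃ β, ∀ r ∈ s, G r = generalG₁ B S β r := by
  obtain ⟨β, hβ⟩ := exists_forall_eq_add_of_hasDerivAt hs hs' (g := generalG₁ B S 0) hG
    fun r hr θ => by
      rw [hE2 r hr θ]
      exact hasDerivAt_generalG₁_radial (ne_of_mem_of_not_mem hr h0)
  exact ⟨β, fun r hr => by rw [hβ r hr]; ext θ; simp [generalG₁]⟩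

theorem exists_eq_generalG₂ (hs : IsOpen s) (hs' : IsPreconnected s) (h0 : 0 ∉ s)
    (hR : DifferentiableOn 𝕜 R s) (hS : Differentiable 𝕜 (deriv S)) (hβ : Differentiable 𝕜 β)
    (hG : ∀ θ, DifferentiableOn 𝕜 (fun r => G r θ) s)
    (hE4 : ∀ r ∈ s, ∀ θ, deriv (fun r' => G r' θ) r
      = 2 * B * (deriv R r - 2 * S θ / r ^ 3) - 1 / r ^ 2 * deriv (generalG₁ B S β r) θ) :
    ∃ ξ, ∀ r ∈ s, G r = generalG₂ B R S β ξ r := by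
  obtain ⟨ξ, hξ⟩ := exists_forall_eq_add_of_hasDerivAt hs hs' (g := generalG₂ B R S β 0) hG
    fun r hr θ => by
      rw [hE4 r hr θ, (hasDerivAt_generalG₁_angular (hS θ) (hβ θ)).deriv]
      exact hasDerivAt_generalG₂_radial (ne_of_mem_of_not_mem hr h0)
        (hR.differentiableAt (hs.mem_nhds hr))
  exact ⟨ξ, fun r hr => by rw [hξ r hr]; ext θ; simp [generalG₂]⟩

end RadialIntegration

theorem generic_case_integration_general (hs : IsOpen s) (hs' : IsConnected s) (h0 : 0 ∉ s)
    (B₀ D₀ : 𝕜) (R S : 𝕜 → 𝕜) (G₁ G₂ : 𝕜 → 𝕜 → 𝕜)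
    (hR : DifferentiableOn 𝕜 R s) (hS : ContDiff 𝕜 2 S)
    (hS₂ : Differentiable 𝕜 (iteratedDeriv 2 S))
    (hG₁r : ∀ θ, DifferentiableOn 𝕜 (fun r => G₁ r θ) s)
    (hG₁θ : ∀ r ∈ s, Differentiable 𝕜 (G₁ r))
    (hG₂r : ∀ θ, DifferentiableOn 𝕜 (fun r => G₂ r θ) s)
    (hG₂θ : ∀ r ∈ s, Differentiable 𝕜 (G₂ r))
    (hE2 : ∀ r ∈ s, ∀ θ, deriv (fun r' => G₁ r' θ) r = B₀ * deriv S θ / r ^ 2)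
    (hE3 : ∀ r ∈ s, ∀ θ, 1 / r ^ 2 * deriv (fun θ' => G₂ r θ') θ
      = 3 * (B₀ / r ^ 2 + D₀) * deriv S θ / r ^ 2 - G₁ r θ / r ^ 3)
    (hE4 : ∀ r ∈ s, ∀ θ, deriv (fun r' => G₂ r' θ) r
      = 2 * B₀ * (deriv R r - 2 * S θ / r ^ 3) - 1 / r ^ 2 * deriv (fun θ' => G₁ r θ') θ) :
    ∃ β ξ : 𝕜 → 𝕜, ContDiff 𝕜 2 β ∧ ContDiff 𝕜 2 ξ ∧
      (∀ r ∈ s, ∀ θ,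
        G₁ r θ = -(B₀ * deriv S θ) / r + β θ ∧
        G₂ r θ = 2 * B₀ * (R r + S θ / r ^ 2) - B₀ * iteratedDeriv 2 S θ / (2 * r ^ 2)
          + deriv β θ / r + ξ θ) ∧
      ∀ θ,
        iteratedDeriv 2 β θ + β θ = 0 ∧
        deriv ξ θ = 3 * D₀ * deriv S θ ∧
        B₀ * (iteratedDeriv 3 S θ + 4 * deriv S θ) = 0 := by
  obtain ⟨ρ, hρ⟩ := hs'.nonempty
  have hinf : s.Infinite := infinite_of_mem_nhds ρ (hs.mem_nhds hρ)
  obtain ⟨dS, cS'⟩ := contDiff_two_iff_deriv.1 hS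
  have dS' : Differentiable 𝕜 (deriv S) := cS'.differentiable one_ne_zero
  obtain ⟨β, hβ⟩ := exists_eq_generalG₁ hs hs'.isPreconnected h0 hG₁r hE2
  have dβ : Differentiable 𝕜 β := differentiable_of_generalG₁ dS' (hβ ρ hρ ▸ hG₁θ ρ hρ)
  obtain ⟨ξ, hξ⟩ := exists_eq_generalG₂ hs hs'.isPreconnected h0 hR dS' dβ hG₂r
    fun r hr θ => hβ r hr ▸ hE4 r hr θ
  obtain ⟨dβ', dξ⟩ := differentiable_of_generalG₂ hinf.nontrivial dS hS₂
    fun r hr => hξ r hr ▸ hG₂θ r hr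
  have hang (θ : 𝕜) := angular_equations hinf h0 (dS θ) (hS₂ θ) (dβ' θ) (dξ θ)
    fun r hr => hβ r hr ▸ hξ r hr ▸ hE3 r hr θ
  refine ⟨β, ξ, ?_, ?_, fun r hr θ => ⟨congrFun (hβ r hr) θ, congrFun (hξ r hr) θ⟩, hang⟩
  · exact contDiff_two_of_iteratedDeriv_two_eq_neg dβ dβ'
      (funext fun θ => eq_neg_of_add_eq_zero_left (hang θ).1)
  · have hξ' : deriv ξ = fun θ => 3 * D₀ * deriv S θ := funext fun θ => (hang θ).2.1
    exact contDiff_two_iff_deriv.2 ⟨dξ, hξ' ▸ contDiff_const.mul cS'⟩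

end RCLike

/-- Integration of the determining equations (E2)–(E4) in the case where all
leading constants `A₁,…,C₂` of the third order integral vanish (so `F₁ = F₃ = 0`,
`F₂ = B₀`, `F₄ = B₀/r² + D₀`): the functions `G₁, G₂` are determined up to
functions `β(θ), ξ(θ)` satisfying `β″ + β = 0`, `ξ′ = 3D₀S′` and
`B₀(S⁽³⁾ + 4S′) = 0`. -/
theorem generic_case_integration (B₀ D₀ : ℝ) (R S : ℝ → ℝ) (G₁ G₂ : ℝ → ℝ → ℝ)
    (hR : ContDiffOn ℝ 1 R (Set.Ioi 0)) (hS : ContDiff ℝ 3 S)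
    (hG₁ : ContDiffOn ℝ 1 (Function.uncurry G₁) (Set.Ioi 0 ×ˢ Set.univ))
    (hG₂ : ContDiffOn ℝ 1 (Function.uncurry G₂) (Set.Ioi 0 ×ˢ Set.univ))
    (hE2 : ∀ r ∈ Set.Ioi (0 : ℝ), ∀ θ : ℝ,
      deriv (fun r' => G₁ r' θ) r = B₀ * deriv S θ / r ^ 2)
    (hE3 : ∀ r ∈ Set.Ioi (0 : ℝ), ∀ θ : ℝ,
      (1 / r ^ 2) * deriv (fun θ' => G₂ r θ') θ
        = 3 * (B₀ / r ^ 2 + D₀) * deriv S θ / r ^ 2 - G₁ r θ / r ^ 3)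
    (hE4 : ∀ r ∈ Set.Ioi (0 : ℝ), ∀ θ : ℝ,
      deriv (fun r' => G₂ r' θ) r
        = 2 * B₀ * (deriv R r - 2 * S θ / r ^ 3)
          - (1 / r ^ 2) * deriv (fun θ' => G₁ r θ') θ) :
    ∃ β ξ : ℝ → ℝ, ContDiff ℝ 2 β ∧ ContDiff ℝ 2 ξ ∧
      (∀ r ∈ Set.Ioi (0 : ℝ), ∀ θ : ℝ,
        G₁ r θ = -(B₀ * deriv S θ) / r + β θ ∧
        G₂ r θ = 2 * B₀ * (R r + S θ / r ^ 2) - B₀ * iteratedDeriv 2 S θ / (2 * r ^ 2)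
          + deriv β θ / r + ξ θ) ∧
      (∀ θ : ℝ,
        iteratedDeriv 2 β θ + β θ = 0 ∧
        deriv ξ θ = 3 * D₀ * deriv S θ ∧
        B₀ * (iteratedDeriv 3 S θ + 4 * deriv S θ) = 0) := by
  have hG₁' := hG₁.differentiableOn one_ne_zero
  have hG₂' := hG₂.differentiableOn one_ne_zero
  exact generic_case_integration_general isOpen_Ioi isConnected_Ioi self_notMem_Ioi B₀ D₀ R S G₁ G₂
    (hR.differentiableOn one_ne_zero) (hS.of_le (by norm_num))
    (hS.differentiable_iteratedDeriv 2 (by norm_num))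
    (fun θ => differentiableOn_left_of_uncurry hG₁' (mem_univ θ))
    (fun r hr => differentiableOn_univ.1 (differentiableOn_right_of_uncurry hG₁' hr))
    (fun θ => differentiableOn_left_of_uncurry hG₂' (mem_univ θ))
    (fun r hr => differentiableOn_univ.1 (differentiableOn_right_of_uncurry hG₂' hr)) hE2 hE3 hE4
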